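/- For a bounded kernel weight function W with |W(k)| ≤ W_max for all k in a finite index set F, and matrices P_{t+k} with all entries in [0, C·α], the weighted average P_{t,r} = |F|⁻¹ Σ_{k∈F} W(k) P_{t+k} satisfies: for any unit vectors x, y ∈ ℝⁿ, the sum over pairs (i,j) with |x_i y_j| > √(Cαr/n) of |x_i y_j P_{t,r}(i,j)| is at most W_max·√(Cnα/r), where r = |F| (assume |F| ≥ r ≥ 1). -/

import Mathlib

/-- A weighted average of numbers bounded by `b`, with weights bounded by `w`, is bounded by
`w * b`. -/
lemma abs_weighted_average_le {ι : Type*} [Fintype ι] [Nonempty ι] {W f : ι → ℝ} {w b : ℝ}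
    (hW : ∀ k, |W k| ≤ w) (hf : ∀ k, |f k| ≤ b) :
    |(Fintype.card ι : ℝ)⁻¹ * ∑ k, W k * f k| ≤ w * b := by
  have hcard : (0 : ℝ) < Fintype.card ι := by exact_mod_cast Fintype.card_pos
  have hsum : |∑ k, W k * f k| ≤ Fintype.card ι * (w * b) := by
    calc |∑ k, W k * f k| ≤ ∑ k, |W k * f k| := Finset.abs_sum_le_sum_abs _ _
      _ ≤ ∑ _k : ι, w * b := Finset.sum_le_sum fun k _ => by
          rw [abs_mul]
          exact mul_le_mul (hW k) (hf k) (abs_nonneg _) ((abs_nonneg _).trans (hW k))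
      _ = Fintype.card ι * (w * b) := by simp
  rw [abs_mul, abs_of_pos (inv_pos.mpr hcard), inv_mul_le_iff₀ hcard]
  exact hsum

/-- The sum of the absolute values exceeding a threshold `s` is at most the sum of squares
divided by `s`. -/
lemma sum_abs_filter_lt_le {β : Type*} [Fintype β] (a : β → ℝ) {s : ℝ} (hs : 0 < s) :
    ∑ p ∈ Finset.univ.filter (fun p => s < |a p|), |a p| ≤ (∑ p, a p ^ 2) / s := by
  rw [Finset.sum_div]
  refine (Finset.sum_le_sum fun p hp => ?_).trans
    (Finset.sum_le_sum_of_subset_of_nonneg (Finset.filter_subset _ _) fun p _ _ => by positivity)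
  have hp' : s < |a p| := (Finset.mem_filter.mp hp).2
  rw [le_div_iff₀ hs, ← sq_abs, sq]
  exact mul_le_mul_of_nonneg_left hp'.le (abs_nonneg _)


theorem heavy_pairs_bound {n : ℕ} {ι : Type*} [Fintype ι] [Nonempty ι]
    (W : ι → ℝ) (Wmax : ℝ) (hW : ∀ k, |W k| ≤ Wmax)
    (C α : ℝ) (hC : 0 < C) (hα : 0 < α)
    (Pm : ι → Matrix (Fin n) (Fin n) ℝ)
    (hPm : ∀ k i j, Pm k i j ∈ Set.Icc (0 : ℝ) (C * α))
    (r : ℕ) (hr1 : 1 ≤ r) (hr2 : r ≤ Fintype.card ι)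
    (x y : Fin n → ℝ) (hx : ∑ i, x i ^ 2 = 1) (hy : ∑ i, y i ^ 2 = 1)
    (Pbar : Matrix (Fin n) (Fin n) ℝ)
    (hPbar : Pbar = (Fintype.card ι : ℝ)⁻¹ • ∑ k, W k • Pm k) :
    ∑ p ∈ Finset.univ.filter
        (fun p : Fin n × Fin n => Real.sqrt (C * α * r / n) < |x p.1 * y p.2|),
      |x p.1 * y p.2 * Pbar p.1 p.2| ≤ Wmax * Real.sqrt (C * n * α / r) := by
  have hn : (0 : ℝ) < n := by
    rcases n.eq_zero_or_pos with rfl | h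
    · simp at hx
    · exact_mod_cast h
  have hr : (0 : ℝ) < r := by exact_mod_cast hr1
  have hw : 0 ≤ Wmax := (abs_nonneg _).trans (hW (Classical.arbitrary ι))
  have hentry (i j : Fin n) : |Pbar i j| ≤ Wmax * (C * α) := by
    have h := abs_weighted_average_le (f := fun k => Pm k i j) hW
      fun k => (abs_of_nonneg (hPm k i j).1).le.trans (hPm k i j).2
    simpa [hPbar, Matrix.sum_apply] using h
  have hs : 0 < √(C * α * r / n) := by positivity
  have hsq : ∑ p : Fin n × Fin n, (x p.1 * y p.2) ^ 2 = 1 := by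
    simp_rw [mul_pow, Fintype.sum_prod_type, ← Finset.sum_mul_sum, hx, hy, one_mul]
  have hprod : √(C * n * α / r) * √(C * α * r / n) = C * α := by
    rw [← Real.sqrt_mul (by positivity),
      show C * n * α / r * (C * α * r / n) = (C * α) ^ 2 by field_simp,
      Real.sqrt_sq (by positivity)]
  calc _ ≤ ∑ p ∈ Finset.univ.filter
          (fun p : Fin n × Fin n => √(C * α * r / n) < |x p.1 * y p.2|),
          |x p.1 * y p.2| * (Wmax * (C * α)) := Finset.sum_le_sum fun p _ => by
        rw [abs_mul _ (Pbar _ _)]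
        exact mul_le_mul_of_nonneg_left (hentry _ _) (abs_nonneg _)
    _ ≤ 1 / √(C * α * r / n) * (Wmax * (C * α)) := by
        rw [← Finset.sum_mul, ← hsq]
        exact mul_le_mul_of_nonneg_right
          (sum_abs_filter_lt_le (fun p : Fin n × Fin n => x p.1 * y p.2) hs) (by positivity)
    _ = Wmax * √(C * n * α / r) := by
        rw [div_mul_eq_mul_div, one_mul, div_eq_iff hs.ne', mul_assoc, hprod]
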